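/- For every R ≥ R₀ one has (1/R) ∫₀^{2π} |∂_R η(R,θ)| dθ ≤ 𝓔(R) ≤ 𝓔(R₀) and (1/R) ∫₀^{2π} |∂_θ η(R,θ)| dθ ≤ 𝓔(R) ≤ 𝓔(R₀). -/

import Mathlib

open Real MeasureTheory Set

/-- Partial derivative with respect to the first (time) variable `R`. -/
noncomputable def pdR (f : ℝ → ℝ → ℝ) (R θ : ℝ) : ℝ := deriv (fun r => f r θ) R

/-- Partial derivative with respect to the second (space) variable `θ`. -/
noncomputable def pdT (f : ℝ → ℝ → ℝ) (R θ : ℝ) : ℝ := deriv (fun t => f R t) θ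

/-!
Write `e` for the energy density and `p` for the momentum density, so that the constraint equations
read `∂_R η = R e` and `∂_θ η = R p`. Completing squares gives `|p| ≤ e`, which yields both
comparisons with the energy. The wave equations imply the local balance law
`∂_R e - ∂_θ p = -(2 / R) ((∂_R U)² + e^{4U} / (4 R²) (∂_θ A)²)`.
Integrated over `[R₀, R]` and one spatial period, the divergence theorem turns the left side into
the energy difference, the fluxes through the two ends of the period cancelling, while the right
side is nonpositive.
-/

open Filter Topology
open Function (uncurry Periodic)

section PartialDerivatives

variable {f : ℝ → ℝ → ℝ} {R θ L : ℝ}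

lemma hasDerivAt_uncurry_fst (hf : DifferentiableAt ℝ (uncurry f) (R, θ)) :
    HasDerivAt (fun r => f r θ) (fderiv ℝ (uncurry f) (R, θ) (1, 0)) R :=
  hf.hasFDerivAt.comp_hasDerivAt (f := fun r => (r, θ)) R
    ((hasDerivAt_id R).prodMk (hasDerivAt_const R θ))

lemma hasDerivAt_uncurry_snd (hf : DifferentiableAt ℝ (uncurry f) (R, θ)) :
    HasDerivAt (fun t => f R t) (fderiv ℝ (uncurry f) (R, θ) (0, 1)) θ :=
  hf.hasFDerivAt.comp_hasDerivAt (f := fun t => (R, t)) θ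
    ((hasDerivAt_const θ R).prodMk (hasDerivAt_id θ))

lemma pdR_eq_fderiv (hf : DifferentiableAt ℝ (uncurry f) (R, θ)) :
    pdR f R θ = fderiv ℝ (uncurry f) (R, θ) (1, 0) :=
  (hasDerivAt_uncurry_fst hf).deriv

lemma pdT_eq_fderiv (hf : DifferentiableAt ℝ (uncurry f) (R, θ)) :
    pdT f R θ = fderiv ℝ (uncurry f) (R, θ) (0, 1) :=
  (hasDerivAt_uncurry_snd hf).deriv

lemma hasDerivAt_pdR (hf : DifferentiableAt ℝ (uncurry f) (R, θ)) :
    HasDerivAt (fun r => f r θ) (pdR f R θ) R :=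
  (hasDerivAt_uncurry_fst hf).differentiableAt.hasDerivAt

lemma hasDerivAt_pdT (hf : DifferentiableAt ℝ (uncurry f) (R, θ)) :
    HasDerivAt (fun t => f R t) (pdT f R θ) θ :=
  (hasDerivAt_uncurry_snd hf).differentiableAt.hasDerivAt

lemma uncurry_pdR_eventuallyEq (hf : ContDiffAt ℝ 1 (uncurry f) (R, θ)) :
    uncurry (pdR f) =ᶠ[𝓝 (R, θ)] fun p => fderiv ℝ (uncurry f) p (1, 0) := by
  filter_upwards [hf.eventually (by simp)] with p hp
  exact pdR_eq_fderiv (hp.differentiableAt one_ne_zero)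

lemma uncurry_pdT_eventuallyEq (hf : ContDiffAt ℝ 1 (uncurry f) (R, θ)) :
    uncurry (pdT f) =ᶠ[𝓝 (R, θ)] fun p => fderiv ℝ (uncurry f) p (0, 1) := by
  filter_upwards [hf.eventually (by simp)] with p hp
  exact pdT_eq_fderiv (hp.differentiableAt one_ne_zero)

lemma contDiffAt_pdR {m n : WithTop ℕ∞} (hf : ContDiffAt ℝ n (uncurry f) (R, θ))
    (hmn : m + 1 ≤ n) : ContDiffAt ℝ m (uncurry (pdR f)) (R, θ) :=
  ((hf.fderiv_right hmn).clm_apply contDiffAt_const).congr_of_eventuallyEq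
    (uncurry_pdR_eventuallyEq (hf.of_le (le_add_self.trans hmn)))

lemma contDiffAt_pdT {m n : WithTop ℕ∞} (hf : ContDiffAt ℝ n (uncurry f) (R, θ))
    (hmn : m + 1 ≤ n) : ContDiffAt ℝ m (uncurry (pdT f)) (R, θ) :=
  ((hf.fderiv_right hmn).clm_apply contDiffAt_const).congr_of_eventuallyEq
    (uncurry_pdT_eventuallyEq (hf.of_le (le_add_self.trans hmn)))

lemma differentiableAt_pdR (hf : ContDiffAt ℝ 2 (uncurry f) (R, θ)) :
    DifferentiableAt ℝ (uncurry (pdR f)) (R, θ) :=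
  (contDiffAt_pdR hf one_add_one_eq_two.le).differentiableAt one_ne_zero

lemma differentiableAt_pdT (hf : ContDiffAt ℝ 2 (uncurry f) (R, θ)) :
    DifferentiableAt ℝ (uncurry (pdT f)) (R, θ) :=
  (contDiffAt_pdT hf one_add_one_eq_two.le).differentiableAt one_ne_zero

theorem pdR_pdT_comm (hf : ContDiffAt ℝ 2 (uncurry f) (R, θ)) :
    pdR (pdT f) R θ = pdT (pdR f) R θ := by
  have hf₁ : ContDiffAt ℝ 1 (uncurry f) (R, θ) := hf.of_le one_le_two
  have hfderiv : DifferentiableAt ℝ (fderiv ℝ (uncurry f)) (R, θ) :=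
    (hf.fderiv_right one_add_one_eq_two.le).differentiableAt one_ne_zero
  have hfderiv_apply (v w : ℝ × ℝ) :
      fderiv ℝ (fun p => fderiv ℝ (uncurry f) p v) (R, θ) w
        = fderiv ℝ (fderiv ℝ (uncurry f)) (R, θ) w v := by
    rw [fderiv_clm_apply hfderiv (differentiableAt_const v)]
    simp
  rw [pdR_eq_fderiv (differentiableAt_pdT hf), pdT_eq_fderiv (differentiableAt_pdR hf),
    (uncurry_pdT_eventuallyEq hf₁).fderiv_eq, (uncurry_pdR_eventuallyEq hf₁).fderiv_eq,
    hfderiv_apply, hfderiv_apply]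
  exact hf.isSymmSndFDerivAt (by simp) _ _

lemma periodic_pdR (hf : ∀ᶠ r in 𝓝 R, Periodic (f r) L) : Periodic (pdR f R) L := fun θ =>
  EventuallyEq.deriv_eq (hf.mono fun _ hr => hr θ)

lemma periodic_pdT (hf : Periodic (f R) L) : Periodic (pdT f R) L := fun θ => by
  rw [pdT, ← deriv_comp_add_const, pdT]
  exact congrArg (deriv · θ) (funext hf)

end PartialDerivatives

lemma integral_sub_integral_eq_integral_pdR_sub_pdT {e p : ℝ → ℝ → ℝ} {a b c d : ℝ}
    (he : ∀ R ∈ uIcc a b, ∀ θ ∈ uIcc c d, ContDiffAt ℝ 1 (uncurry e) (R, θ))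
    (hp : ∀ R ∈ uIcc a b, ∀ θ ∈ uIcc c d, ContDiffAt ℝ 1 (uncurry p) (R, θ))
    (hper : ∀ R ∈ uIoo a b, p R d = p R c) :
    (∫ θ in c..d, e b θ) - ∫ θ in c..d, e a θ
      = ∫ R in a..b, ∫ θ in c..d, pdR e R θ - pdT p R θ := by
  have hinterior : Ioo (min a b) (max a b) ×ˢ Ioo (min c d) (max c d) ⊆ uIcc a b ×ˢ uIcc c d :=
    prod_mono Ioo_subset_Icc_self Ioo_subset_Icc_self
  have hdiff {g : ℝ → ℝ → ℝ}
      (hg : ∀ R ∈ uIcc a b, ∀ θ ∈ uIcc c d, ContDiffAt ℝ 1 (uncurry g) (R, θ))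
      {x : ℝ × ℝ} (hx : x ∈ uIcc a b ×ˢ uIcc c d) : DifferentiableAt ℝ (uncurry g) x :=
    (hg x.1 hx.1 x.2 hx.2).differentiableAt one_ne_zero
  have hintegrable : IntegrableOn
      (fun x => fderiv ℝ (uncurry e) x (1, 0) + (-fderiv ℝ (uncurry p) x) (0, 1))
      (uIcc a b ×ˢ uIcc c d) := by
    refine ContinuousOn.integrableOn_compact (isCompact_uIcc.prod isCompact_uIcc) fun x hx => ?_
    have he' := ((he x.1 hx.1 x.2 hx.2).fderiv_right (zero_add 1).le).continuousAt
    have hp' := ((hp x.1 hx.1 x.2 hx.2).fderiv_right (zero_add 1).le).continuousAt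
    exact ((he'.clm_apply continuousAt_const).add
      (hp'.neg.clm_apply continuousAt_const)).continuousWithinAt
  have hdivergence := integral2_divergence_prod_of_hasFDerivAt (uncurry e) (-uncurry p)
    (fderiv ℝ (uncurry e)) (fun x => -fderiv ℝ (uncurry p) x) a c b d
    (fun x hx => (hdiff he hx).continuousAt.continuousWithinAt)
    (fun x hx => (hdiff hp hx).neg.continuousAt.continuousWithinAt)
    (fun x hx => (hdiff he (hinterior hx)).hasFDerivAt)
    (fun x hx => (hdiff hp (hinterior hx)).hasFDerivAt.neg) hintegrable
  have hboundary : ∫ R in a..b, (-uncurry p) (R, d) = ∫ R in a..b, (-uncurry p) (R, c) :=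
    intervalIntegral.integral_congr_uIoo fun R hR => congrArg Neg.neg (hper R hR)
  rw [hboundary, sub_self, zero_add] at hdivergence
  refine hdivergence.symm.trans ?_
  refine intervalIntegral.integral_congr fun R hR => intervalIntegral.integral_congr fun θ hθ => ?_
  simp only [pdR_eq_fderiv (hdiff he ⟨hR, hθ⟩), pdT_eq_fderiv (hdiff hp ⟨hR, hθ⟩), sub_eq_add_neg,
    neg_apply]

lemma one_div_mul_integral_abs_const_mul {R : ℝ} (hR : 0 < R) (g : ℝ → ℝ) (a b : ℝ) :
    1 / R * ∫ θ in a..b, |R * g θ| = ∫ θ in a..b, |g θ| := by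
  simp only [abs_mul, abs_of_pos hR, intervalIntegral.integral_const_mul]
  field_simp

/-- The pair `(U, A)` solves the Gowdy wave equations at the point `(R, θ)`. -/
structure IsGowdySolutionAt (U A : ℝ → ℝ → ℝ) (R θ : ℝ) : Prop where
  wave_U : deriv (fun r => r * pdR U r θ) R - deriv (fun t => R * pdT U R t) θ
    = exp (4 * U R θ) / (2 * R) * (pdR A R θ ^ 2 - pdT A R θ ^ 2)
  wave_A : deriv (fun r => r⁻¹ * pdR A r θ) R - deriv (fun t => R⁻¹ * pdT A R t) θ
    = 4 / R * (-(pdR U R θ * pdR A R θ) + pdT U R θ * pdT A R θ)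

/-- The integrand of the energy `𝓔`; the first constraint equation says that `∂_R η` is `R` times
this density. -/
noncomputable def energyDensity (U A : ℝ → ℝ → ℝ) (R θ : ℝ) : ℝ :=
  pdR U R θ ^ 2 + pdT U R θ ^ 2 + exp (4 * U R θ) / (4 * R ^ 2) * (pdR A R θ ^ 2 + pdT A R θ ^ 2)

/-- The momentum density of `(U, A)`: the second constraint equation says that `∂_θ η` is `R` times
this density, and it is also minus the flux of `energyDensity`. -/
noncomputable def momentumDensity (U A : ℝ → ℝ → ℝ) (R θ : ℝ) : ℝ :=
  2 * pdR U R θ * pdT U R θ + exp (4 * U R θ) / (2 * R ^ 2) * (pdR A R θ * pdT A R θ)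

/-- The energy `𝓔(R)` of `(U, A)` over one spatial period `[0, L]`. -/
noncomputable def energy (U A : ℝ → ℝ → ℝ) (L R : ℝ) : ℝ := ∫ θ in (0 : ℝ)..L, energyDensity U A R θ

section Densities

variable {U A : ℝ → ℝ → ℝ} {R θ L : ℝ}

lemma energyDensity_nonneg (U A : ℝ → ℝ → ℝ) (R θ : ℝ) : 0 ≤ energyDensity U A R θ := by
  unfold energyDensity
  positivity

lemma abs_momentumDensity_le_energyDensity (U A : ℝ → ℝ → ℝ) (R θ : ℝ) :
    |momentumDensity U A R θ| ≤ energyDensity U A R θ := by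
  have hadd : energyDensity U A R θ + momentumDensity U A R θ = (pdR U R θ + pdT U R θ) ^ 2
      + exp (4 * U R θ) / (4 * R ^ 2) * (pdR A R θ + pdT A R θ) ^ 2 := by
    unfold energyDensity momentumDensity
    ring
  have hsub : energyDensity U A R θ - momentumDensity U A R θ = (pdR U R θ - pdT U R θ) ^ 2
      + exp (4 * U R θ) / (4 * R ^ 2) * (pdR A R θ - pdT A R θ) ^ 2 := by
    unfold energyDensity momentumDensity
    ring
  have hadd_nonneg : 0 ≤ energyDensity U A R θ + momentumDensity U A R θ := hadd ▸ by positivity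
  have hsub_nonneg : 0 ≤ energyDensity U A R θ - momentumDensity U A R θ := hsub ▸ by positivity
  exact abs_le.2 ⟨by linarith, by linarith⟩

lemma periodic_momentumDensity (hU : ∀ᶠ r in 𝓝 R, Periodic (U r) L)
    (hA : ∀ᶠ r in 𝓝 R, Periodic (A r) L) : Periodic (momentumDensity U A R) L := fun θ => by
  simp only [momentumDensity, hU.self_of_nhds θ, periodic_pdR hU θ, periodic_pdR hA θ,
    periodic_pdT hU.self_of_nhds θ, periodic_pdT hA.self_of_nhds θ]

lemma contDiffAt_exp_div {n : WithTop ℕ∞} {c : ℝ} (hU : ContDiffAt ℝ n (uncurry U) (R, θ))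
    (hR : R ≠ 0) (hc : c ≠ 0) :
    ContDiffAt ℝ n (fun x : ℝ × ℝ => exp (4 * U x.1 x.2) / (c * x.1 ^ 2)) (R, θ) :=
  (contDiffAt_const.mul hU).exp.div (contDiffAt_const.mul (contDiffAt_fst.pow 2))
    (mul_ne_zero hc (pow_ne_zero 2 hR))

lemma contDiffAt_energyDensity {m n : WithTop ℕ∞} (hU : ContDiffAt ℝ n (uncurry U) (R, θ))
    (hA : ContDiffAt ℝ n (uncurry A) (R, θ)) (hmn : m + 1 ≤ n) (hR : R ≠ 0) :
    ContDiffAt ℝ m (uncurry (energyDensity U A)) (R, θ) :=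
  (((contDiffAt_pdR hU hmn).pow 2).add ((contDiffAt_pdT hU hmn).pow 2)).add
    ((contDiffAt_exp_div (hU.of_le (le_self_add.trans hmn)) hR four_ne_zero).mul
      (((contDiffAt_pdR hA hmn).pow 2).add ((contDiffAt_pdT hA hmn).pow 2)))

lemma contDiffAt_momentumDensity {m n : WithTop ℕ∞} (hU : ContDiffAt ℝ n (uncurry U) (R, θ))
    (hA : ContDiffAt ℝ n (uncurry A) (R, θ)) (hmn : m + 1 ≤ n) (hR : R ≠ 0) :
    ContDiffAt ℝ m (uncurry (momentumDensity U A)) (R, θ) :=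
  ((contDiffAt_const.mul (contDiffAt_pdR hU hmn)).mul (contDiffAt_pdT hU hmn)).add
    ((contDiffAt_exp_div (hU.of_le (le_self_add.trans hmn)) hR two_ne_zero).mul
      ((contDiffAt_pdR hA hmn).mul (contDiffAt_pdT hA hmn)))

lemma pdR_energyDensity (hU : ContDiffAt ℝ 2 (uncurry U) (R, θ))
    (hA : ContDiffAt ℝ 2 (uncurry A) (R, θ)) (hR : R ≠ 0) :
    pdR (energyDensity U A) R θ
      = 2 * pdR U R θ * pdR (pdR U) R θ + 2 * pdT U R θ * pdR (pdT U) R θ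
        + exp (4 * U R θ) / R ^ 2 * (pdR U R θ - 1 / (2 * R)) * (pdR A R θ ^ 2 + pdT A R θ ^ 2)
        + exp (4 * U R θ) / (2 * R ^ 2)
          * (pdR A R θ * pdR (pdR A) R θ + pdT A R θ * pdR (pdT A) R θ) := by
  have hexp := ((hasDerivAt_pdR (hU.differentiableAt two_ne_zero)).const_mul 4).exp.div
    (((hasDerivAt_id R).pow 2).const_mul 4) (by simpa using hR)
  have hderiv : HasDerivAt (fun r => energyDensity U A r θ) _ R :=
    (((hasDerivAt_pdR (differentiableAt_pdR hU)).pow 2).add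
      ((hasDerivAt_pdR (differentiableAt_pdT hU)).pow 2)).add
    (hexp.mul (((hasDerivAt_pdR (differentiableAt_pdR hA)).pow 2).add
      ((hasDerivAt_pdR (differentiableAt_pdT hA)).pow 2)))
  rw [pdR, hderiv.deriv]
  simp only [id, Pi.pow_apply, Pi.div_apply]
  field_simp
  push_cast
  ring

lemma pdT_momentumDensity (hU : ContDiffAt ℝ 2 (uncurry U) (R, θ))
    (hA : ContDiffAt ℝ 2 (uncurry A) (R, θ)) :
    pdT (momentumDensity U A) R θ
      = 2 * pdT (pdR U) R θ * pdT U R θ + 2 * pdR U R θ * pdT (pdT U) R θ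
        + 2 * exp (4 * U R θ) / R ^ 2 * pdT U R θ * (pdR A R θ * pdT A R θ)
        + exp (4 * U R θ) / (2 * R ^ 2)
          * (pdT (pdR A) R θ * pdT A R θ + pdR A R θ * pdT (pdT A) R θ) := by
  have hexp := ((hasDerivAt_pdT (hU.differentiableAt two_ne_zero)).const_mul 4).exp.div_const
    (2 * R ^ 2)
  have hderiv : HasDerivAt (fun t => momentumDensity U A R t) _ θ :=
    (((hasDerivAt_pdT (differentiableAt_pdR hU)).const_mul 2).mul
      (hasDerivAt_pdT (differentiableAt_pdT hU))).add
    (hexp.mul ((hasDerivAt_pdT (differentiableAt_pdR hA)).mul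
      (hasDerivAt_pdT (differentiableAt_pdT hA))))
  rw [pdT, hderiv.deriv]
  ring

end Densities

namespace IsGowdySolutionAt

variable {U A : ℝ → ℝ → ℝ} {R θ : ℝ}

lemma pdR_pdR_U (h : IsGowdySolutionAt U A R θ) (hU : ContDiffAt ℝ 2 (uncurry U) (R, θ))
    (hR : R ≠ 0) :
    pdR (pdR U) R θ = pdT (pdT U) R θ - pdR U R θ / R
      + exp (4 * U R θ) / (2 * R ^ 2) * (pdR A R θ ^ 2 - pdT A R θ ^ 2) := by
  have hr : HasDerivAt (fun r => r * pdR U r θ) (1 * pdR U R θ + R * pdR (pdR U) R θ) R :=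
    (hasDerivAt_id R).mul (hasDerivAt_pdR (differentiableAt_pdR hU))
  have ht : HasDerivAt (fun t => R * pdT U R t) (R * pdT (pdT U) R θ) θ :=
    (hasDerivAt_pdT (differentiableAt_pdT hU)).const_mul R
  have hwave := h.wave_U
  rw [hr.deriv, ht.deriv] at hwave
  field_simp at hwave ⊢
  linarith

lemma pdR_pdR_A (h : IsGowdySolutionAt U A R θ) (hA : ContDiffAt ℝ 2 (uncurry A) (R, θ))
    (hR : R ≠ 0) :
    pdR (pdR A) R θ = pdT (pdT A) R θ + pdR A R θ / R
      + 4 * (-(pdR U R θ * pdR A R θ) + pdT U R θ * pdT A R θ) := by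
  have hr : HasDerivAt (fun r => r⁻¹ * pdR A r θ)
      (-(R ^ 2)⁻¹ * pdR A R θ + R⁻¹ * pdR (pdR A) R θ) R :=
    (hasDerivAt_inv hR).mul (hasDerivAt_pdR (differentiableAt_pdR hA))
  have ht : HasDerivAt (fun t => R⁻¹ * pdT A R t) (R⁻¹ * pdT (pdT A) R θ) θ :=
    (hasDerivAt_pdT (differentiableAt_pdT hA)).const_mul R⁻¹
  have hwave := h.wave_A
  rw [hr.deriv, ht.deriv] at hwave
  field_simp at hwave ⊢
  linarith

theorem pdR_energyDensity_sub_pdT_momentumDensity (h : IsGowdySolutionAt U A R θ)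
    (hU : ContDiffAt ℝ 2 (uncurry U) (R, θ)) (hA : ContDiffAt ℝ 2 (uncurry A) (R, θ))
    (hR : R ≠ 0) :
    pdR (energyDensity U A) R θ - pdT (momentumDensity U A) R θ
      = -(2 / R * (pdR U R θ ^ 2 + exp (4 * U R θ) / (4 * R ^ 2) * pdT A R θ ^ 2)) := by
  rw [pdR_energyDensity hU hA hR, pdT_momentumDensity hU hA, h.pdR_pdR_U hU hR,
    h.pdR_pdR_A hA hR, pdR_pdT_comm hU, pdR_pdT_comm hA]
  field_simp
  ring

end IsGowdySolutionAt

section Energy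

variable {R₀ L : ℝ} {U A : ℝ → ℝ → ℝ}

theorem energy_sub_energy_eq_neg_integral (hR₀ : 0 < R₀)
    (hU : ∀ R, R₀ ≤ R → ∀ θ, ContDiffAt ℝ 2 (uncurry U) (R, θ))
    (hA : ∀ R, R₀ ≤ R → ∀ θ, ContDiffAt ℝ 2 (uncurry A) (R, θ))
    (hUper : ∀ R, R₀ ≤ R → Periodic (U R) L) (hAper : ∀ R, R₀ ≤ R → Periodic (A R) L)
    (hUA : ∀ R, R₀ ≤ R → ∀ θ, IsGowdySolutionAt U A R θ) {R : ℝ} (hR : R₀ ≤ R) :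
    energy U A L R - energy U A L R₀ = -∫ r in R₀..R, ∫ θ in (0 : ℝ)..L,
      2 / r * (pdR U r θ ^ 2 + exp (4 * U r θ) / (4 * r ^ 2) * pdT A r θ ^ 2) := by
  have hle {r : ℝ} (hr : r ∈ uIcc R₀ R) : R₀ ≤ r := (uIcc_of_le hR ▸ hr).1
  have hne {r : ℝ} (hr : r ∈ uIcc R₀ R) : r ≠ 0 := (hR₀.trans_le (hle hr)).ne'
  have hflux (r : ℝ) (hr : r ∈ uIoo R₀ R) : momentumDensity U A r L = momentumDensity U A r 0 := by
    have hlt : R₀ < r := (uIoo_of_le hR ▸ hr).1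
    exact (periodic_momentumDensity ((eventually_ge_nhds hlt).mono hUper)
      ((eventually_ge_nhds hlt).mono hAper)).eq
  simp only [energy, ← intervalIntegral.integral_neg]
  rw [integral_sub_integral_eq_integral_pdR_sub_pdT
    (fun r hr θ _ => contDiffAt_energyDensity (hU r (hle hr) θ) (hA r (hle hr) θ)
      one_add_one_eq_two.le (hne hr))
    (fun r hr θ _ => contDiffAt_momentumDensity (hU r (hle hr) θ) (hA r (hle hr) θ)
      one_add_one_eq_two.le (hne hr)) hflux]
  exact intervalIntegral.integral_congr fun r hr => intervalIntegral.integral_congr fun θ _ =>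
    (hUA r (hle hr) θ).pdR_energyDensity_sub_pdT_momentumDensity (hU r (hle hr) θ)
      (hA r (hle hr) θ) (hne hr)

theorem energy_le_energy (hR₀ : 0 < R₀) (hL : 0 ≤ L)
    (hU : ∀ R, R₀ ≤ R → ∀ θ, ContDiffAt ℝ 2 (uncurry U) (R, θ))
    (hA : ∀ R, R₀ ≤ R → ∀ θ, ContDiffAt ℝ 2 (uncurry A) (R, θ))
    (hUper : ∀ R, R₀ ≤ R → Periodic (U R) L) (hAper : ∀ R, R₀ ≤ R → Periodic (A R) L)
    (hUA : ∀ R, R₀ ≤ R → ∀ θ, IsGowdySolutionAt U A R θ) {R : ℝ} (hR : R₀ ≤ R) :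
    energy U A L R ≤ energy U A L R₀ := by
  rw [← sub_nonpos, energy_sub_energy_eq_neg_integral hR₀ hU hA hUper hAper hUA hR, neg_nonpos]
  refine intervalIntegral.integral_nonneg hR fun r hr => ?_
  have hr_pos : 0 < r := hR₀.trans_le hr.1
  exact intervalIntegral.integral_nonneg hL fun θ _ => by positivity

lemma integral_abs_energyDensity (U A : ℝ → ℝ → ℝ) (L R : ℝ) :
    ∫ θ in (0 : ℝ)..L, |energyDensity U A R θ| = energy U A L R := by
  simp only [abs_of_nonneg (energyDensity_nonneg U A R _), energy]

lemma integral_abs_momentumDensity_le_energy {R : ℝ} (hL : 0 ≤ L)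
    (hU : ∀ θ, ContDiffAt ℝ 1 (uncurry U) (R, θ)) (hA : ∀ θ, ContDiffAt ℝ 1 (uncurry A) (R, θ))
    (hR : R ≠ 0) : ∫ θ in (0 : ℝ)..L, |momentumDensity U A R θ| ≤ energy U A L R := by
  have hslice {g : ℝ → ℝ → ℝ} (hg : ∀ θ, ContDiffAt ℝ 0 (uncurry g) (R, θ)) : Continuous (g R) :=
    continuous_iff_continuousAt.2 fun θ =>
      (hg θ).continuousAt.comp (f := fun t => (R, t)) (Continuous.prodMk_right R).continuousAt
  have hmomentum : Continuous (momentumDensity U A R) :=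
    hslice fun θ => contDiffAt_momentumDensity (hU θ) (hA θ) (zero_add 1).le hR
  have henergy : Continuous (energyDensity U A R) :=
    hslice fun θ => contDiffAt_energyDensity (hU θ) (hA θ) (zero_add 1).le hR
  exact intervalIntegral.integral_mono hL (hmomentum.abs.intervalIntegrable _ _)
    (henergy.intervalIntegrable _ _) (abs_momentumDensity_le_energyDensity U A R)

end Energy

theorem stmt2_general {R₀ L : ℝ} (hR₀ : 0 < R₀) (hL : 0 ≤ L) {U A η : ℝ → ℝ → ℝ}
    (hU : ∀ R, R₀ ≤ R → ∀ θ, ContDiffAt ℝ 2 (uncurry U) (R, θ))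
    (hA : ∀ R, R₀ ≤ R → ∀ θ, ContDiffAt ℝ 2 (uncurry A) (R, θ))
    (hUper : ∀ R, R₀ ≤ R → Periodic (U R) L) (hAper : ∀ R, R₀ ≤ R → Periodic (A R) L)
    (hUA : ∀ R, R₀ ≤ R → ∀ θ, IsGowdySolutionAt U A R θ)
    (hηR : ∀ R, R₀ ≤ R → ∀ θ, HasDerivAt (fun r => η r θ) (R * energyDensity U A R θ) R)
    (hηT : ∀ R, R₀ ≤ R → ∀ θ, HasDerivAt (fun t => η R t) (R * momentumDensity U A R θ) θ)
    (R : ℝ) (hR : R₀ ≤ R) :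
    (1 / R * ∫ θ in (0 : ℝ)..L, |pdR η R θ| = energy U A L R)
      ∧ (1 / R * ∫ θ in (0 : ℝ)..L, |pdT η R θ| ≤ energy U A L R)
      ∧ energy U A L R ≤ energy U A L R₀ := by
  have hR_pos : 0 < R := hR₀.trans_le hR
  have hpdR (θ : ℝ) : pdR η R θ = R * energyDensity U A R θ := (hηR R hR θ).deriv
  have hpdT (θ : ℝ) : pdT η R θ = R * momentumDensity U A R θ := (hηT R hR θ).deriv
  simp only [hpdR, hpdT, one_div_mul_integral_abs_const_mul hR_pos]
  exact ⟨integral_abs_energyDensity U A L R,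
    integral_abs_momentumDensity_le_energy hL (fun θ => (hU R hR θ).of_le one_le_two)
      (fun θ => (hA R hR θ).of_le one_le_two) hR_pos.ne',
    energy_le_energy hR₀ hL hU hA hUper hAper hUA hR⟩

theorem stmt2
    (R₀ : ℝ) (hR₀ : 0 < R₀)
    (U A : ℝ → ℝ → ℝ)
    (hU : ContDiff ℝ (⊤ : ℕ∞) (Function.uncurry U))
    (hA : ContDiff ℝ (⊤ : ℕ∞) (Function.uncurry A))
    (hUper : ∀ R θ, U R (θ + 2 * π) = U R θ)
    (hAper : ∀ R θ, A R (θ + 2 * π) = A R θ)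
    (eqU : ∀ R, R₀ ≤ R → ∀ θ : ℝ,
      deriv (fun r => r * pdR U r θ) R - deriv (fun t => R * pdT U R t) θ
        = exp (4 * U R θ) / (2 * R) * ((pdR A R θ) ^ 2 - (pdT A R θ) ^ 2))
    (eqA : ∀ R, R₀ ≤ R → ∀ θ : ℝ,
      deriv (fun r => r⁻¹ * pdR A r θ) R - deriv (fun t => R⁻¹ * pdT A R t) θ
        = 4 / R * (-(pdR U R θ * pdR A R θ) + pdT U R θ * pdT A R θ))
    (η : ℝ → ℝ → ℝ)
    (hη : ContDiff ℝ (⊤ : ℕ∞) (Function.uncurry η))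
    (hηper : ∀ R θ, η R (θ + 2 * π) = η R θ)
    (conηR : ∀ R, R₀ ≤ R → ∀ θ : ℝ,
      pdR η R θ = R * ((pdR U R θ) ^ 2 + (pdT U R θ) ^ 2
        + exp (4 * U R θ) / (4 * R ^ 2) * ((pdR A R θ) ^ 2 + (pdT A R θ) ^ 2)))
    (conηT : ∀ R, R₀ ≤ R → ∀ θ : ℝ,
      pdT η R θ = R * (2 * pdR U R θ * pdT U R θ
        + exp (4 * U R θ) / (2 * R ^ 2) * (pdR A R θ * pdT A R θ)))
    (E : ℝ → ℝ)
    (hE : ∀ R, E R = ∫ θ in (0:ℝ)..(2 * π),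
      (pdR U R θ) ^ 2 + (pdT U R θ) ^ 2
        + exp (4 * U R θ) / (4 * R ^ 2) * ((pdR A R θ) ^ 2 + (pdT A R θ) ^ 2))
 :
    ∀ R, R₀ ≤ R →
      (1 / R * ∫ θ in (0:ℝ)..(2 * π), |pdR η R θ| ≤ E R)
        ∧ (1 / R * ∫ θ in (0:ℝ)..(2 * π), |pdT η R θ| ≤ E R)
        ∧ E R ≤ E R₀ := by
  obtain rfl : E = energy U A (2 * π) := funext hE
  have hη₁ : Differentiable ℝ (uncurry η) := hη.differentiable (by simp)
  exact fun R hR => (stmt2_general hR₀ two_pi_pos.le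
    (fun R _ θ => hU.contDiffAt.of_le (WithTop.coe_le_coe.2 le_top))
    (fun R _ θ => hA.contDiffAt.of_le (WithTop.coe_le_coe.2 le_top))
    (fun R _ => hUper R) (fun R _ => hAper R) (fun R hR θ => ⟨eqU R hR θ, eqA R hR θ⟩)
    (fun R hR θ => conηR R hR θ ▸ hasDerivAt_pdR (hη₁ (R, θ)))
    (fun R hR θ => conηT R hR θ ▸ hasDerivAt_pdT (hη₁ (R, θ))) R hR).imp_left Eq.le
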